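/- arXiv:math/0307021 — 2 statements merged into one kernel-verified Lean document; each statement's English description precedes it below -/
import Mathlib

section
/- Let E be a finite-dimensional real inner product space and let L be a linear subspace of E. For every linear subspace G of E with G + L = E there exists a constant C > 0 such that for every linear subspace F of E one has δ(F ∩ L, G ∩ L) ≤ C · δ(F, G). -/
/-- The Verdier distance between two linear subspaces `F` and `G` of a real inner
product space: `δ(F, G) = sup { dist(x, G) : x ∈ F, ‖x‖ = 1 }` (equal to `0` when
`F = {0}`, since then the set is empty and `sSup ∅ = 0` in `ℝ`). -/
noncomputable def verdierDist {E : Type*} [NormedAddCommGroup E] [InnerProductSpace ℝ E]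
    (F G : Submodule ℝ E) : ℝ :=
  sSup ((fun x => Metric.infDist x (G : Set E)) '' {x : E | x ∈ F ∧ ‖x‖ = 1})

/-!
On `L`, the distance to `G` is the quotient norm of `E ⧸ G`. When `L`, `G` and `G ⊔ L` are closed
in a Banach space, the image of `L` in `E ⧸ G` is complete, so by the open mapping theorem the class
of each `x ∈ L` lifts to some `y ∈ L` with `‖y‖ ≤ C * dist(x, G)`. Then `x - y ∈ G ⊓ L`, hence
`dist(x, G ⊓ L) ≤ C * dist(x, G)` for every `x ∈ L`; taking suprema over unit vectors of `F ⊓ L`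
gives the bound on Verdier distances, with `C` independent of `F`.
-/

theorem isClosed_map_mkQ_iff {R M : Type*} [Ring R] [AddCommGroup M] [TopologicalSpace M]
    [Module R M] (S T : Submodule R M) :
    IsClosed (T.map S.mkQ : Set (M ⧸ S)) ↔ IsClosed ((S ⊔ T : Submodule R M) : Set M) := by
  rw [← S.isQuotientMap_mkQL.isClosed_preimage, ← Submodule.comap_map_mkQ S T,
    Submodule.coe_mkQL, Submodule.comap_coe]

theorem infDist_inf_le_norm_of_sub_mem {R E : Type*} [Ring R] [SeminormedAddCommGroup E]
    [Module R E] {L G : Submodule R E} {x y : E} (hx : x ∈ L) (hy : y ∈ L) (hxy : x - y ∈ G) :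
    Metric.infDist x ((G ⊓ L : Submodule R E) : Set E) ≤ ‖y‖ := by
  have hmem : x - y ∈ G ⊓ L := ⟨hxy, L.sub_mem hx hy⟩
  simpa only [dist_eq_norm, sub_sub_cancel] using
    Metric.infDist_le_dist_of_mem (x := x) (SetLike.mem_coe.2 hmem)

section NormedSpace

variable {𝕜 E : Type*} [NontriviallyNormedField 𝕜] [NormedAddCommGroup E] [NormedSpace 𝕜 E]
  [CompleteSpace E] {L G : Submodule 𝕜 E}

theorem exists_norm_le_mul_infDist_of_isClosed_sup
    (hL : IsClosed (L : Set E)) (hG : IsClosed (G : Set E))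
    (hGL : IsClosed ((G ⊔ L : Submodule 𝕜 E) : Set E)) :
    ∃ C > 0, ∀ x ∈ L, ∃ y ∈ L, x - y ∈ G ∧ ‖y‖ ≤ C * Metric.infDist x (G : Set E) := by
  have : CompleteSpace L := hL.completeSpace_coe
  have : CompleteSpace (L.map G.mkQ) := ((isClosed_map_mkQ_iff G L).2 hGL).completeSpace_coe
  let q : L →L[𝕜] L.map G.mkQ := (G.mkQL ∘L L.subtypeL).codRestrict _ fun x =>
    Submodule.mem_map_of_mem x.2
  have hq : Function.Surjective q := by
    rintro ⟨_, x, hx, rfl⟩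
    exact ⟨⟨x, hx⟩, rfl⟩
  obtain ⟨C, hC, hlift⟩ := q.exists_preimage_norm_le hq
  refine ⟨C, hC, fun x hx => ?_⟩
  obtain ⟨y, hyx, hy⟩ := hlift (q ⟨x, hx⟩)
  have hsub : x - y ∈ G := (Submodule.Quotient.eq G).1 (congrArg Subtype.val hyx).symm
  have hnorm : ‖q ⟨x, hx⟩‖ = Metric.infDist x (G : Set E) :=
    QuotientAddGroup.norm_mk (S := G.toAddSubgroup) x
  exact ⟨y, y.2, hsub, hnorm ▸ hy⟩

theorem exists_infDist_inf_le_mul_infDist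
    (hL : IsClosed (L : Set E)) (hG : IsClosed (G : Set E))
    (hGL : IsClosed ((G ⊔ L : Submodule 𝕜 E) : Set E)) :
    ∃ C > 0, ∀ x ∈ L, Metric.infDist x ((G ⊓ L : Submodule 𝕜 E) : Set E) ≤
      C * Metric.infDist x (G : Set E) := by
  obtain ⟨C, hC, hlift⟩ := exists_norm_le_mul_infDist_of_isClosed_sup hL hG hGL
  refine ⟨C, hC, fun x hx => ?_⟩
  obtain ⟨y, hy, hxy, hnorm⟩ := hlift x hx
  exact (infDist_inf_le_norm_of_sub_mem hx hy hxy).trans hnorm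

end NormedSpace

section VerdierDist

variable {E : Type*} [NormedAddCommGroup E] [InnerProductSpace ℝ E] {F G : Submodule ℝ E}

theorem infDist_le_verdierDist {x : E} (hx : x ∈ F) (hx_norm : ‖x‖ = 1) :
    Metric.infDist x (G : Set E) ≤ verdierDist F G := by
  refine le_csSup ⟨1, ?_⟩ (Set.mem_image_of_mem _ ⟨hx, hx_norm⟩)
  rintro _ ⟨y, ⟨-, hy_norm⟩, rfl⟩
  simpa only [dist_zero_right, hy_norm] using Metric.infDist_le_dist_of_mem (x := y) G.zero_mem

theorem verdierDist_le {r : ℝ} (hr : 0 ≤ r)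
    (h : ∀ x ∈ F, ‖x‖ = 1 → Metric.infDist x (G : Set E) ≤ r) : verdierDist F G ≤ r :=
  Real.sSup_le (Set.forall_mem_image.2 fun x hx => h x hx.1 hx.2) hr

theorem verdierDist_nonneg (F G : Submodule ℝ E) : 0 ≤ verdierDist F G :=
  Real.sSup_nonneg (Set.forall_mem_image.2 fun _ _ => Metric.infDist_nonneg)

end VerdierDist

theorem verdierDist_inf_le_of_sup_eq_top_general {E : Type*} [NormedAddCommGroup E]
    [InnerProductSpace ℝ E] [CompleteSpace E] {L G : Submodule ℝ E} (hL : IsClosed (L : Set E))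
    (hG : IsClosed (G : Set E)) (hGL : IsClosed ((G ⊔ L : Submodule ℝ E) : Set E)) :
    ∃ C : ℝ, 0 < C ∧ ∀ F : Submodule ℝ E,
      verdierDist (F ⊓ L) (G ⊓ L) ≤ C * verdierDist F G := by
  obtain ⟨C, hC, hdist⟩ := exists_infDist_inf_le_mul_infDist hL hG hGL
  refine ⟨C, hC, fun F => verdierDist_le (mul_nonneg hC.le (verdierDist_nonneg F G)) ?_⟩
  intro x hx hx_norm
  calc Metric.infDist x ((G ⊓ L : Submodule ℝ E) : Set E)
      ≤ C * Metric.infDist x (G : Set E) := hdist x hx.2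
    _ ≤ C * verdierDist F G := by
        gcongr
        exact infDist_le_verdierDist hx.1 hx_norm

/-- For a fixed subspace `L` and any subspace `G` transverse to `L` (i.e. `G + L = E`),
there is a constant `C > 0` such that `δ(F ∩ L, G ∩ L) ≤ C · δ(F, G)` for all
subspaces `F`. -/
theorem verdierDist_inf_le_of_sup_eq_top {E : Type*} [NormedAddCommGroup E]
    [InnerProductSpace ℝ E] [FiniteDimensional ℝ E]
    (L G : Submodule ℝ E) (hGL : G ⊔ L = ⊤) :
    ∃ C : ℝ, 0 < C ∧ ∀ F : Submodule ℝ E,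
      verdierDist (F ⊓ L) (G ⊓ L) ≤ C * verdierDist F G := by
  have := FiniteDimensional.complete ℝ E
  exact verdierDist_inf_le_of_sup_eq_top_general L.closed_of_finiteDimensional
    G.closed_of_finiteDimensional (G ⊔ L).closed_of_finiteDimensional
end

section
/- Let E be a finite-dimensional real inner product space and let G, L be linear subspaces with L⊥ ⊆ G. Then for every x ∈ L one has dist(x, G ∩ L) = dist(x, G), where dist denotes the Euclidean distance from a point to a subspace. -/
/-! The orthogonal projection onto `L` is a nonexpansive map fixing `x`. Since it changes a vector
only by an element of `Lᗮ ≤ G`, it carries `G` into `G ⊓ L`, so restricting the infimum to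
`G ⊓ L` does not increase it. -/

open Metric

theorem infEDist_le_infEDist_of_mapsTo {α β : Type*} [PseudoEMetricSpace α]
    [PseudoEMetricSpace β] {f : α → β} {s : Set α} {t : Set β} (hf : LipschitzWith 1 f)
    (hst : Set.MapsTo f s t) (x : α) : infEDist (f x) t ≤ infEDist x s :=
  le_infEDist.mpr fun y hy =>
    calc
      infEDist (f x) t ≤ edist (f x) (f y) := infEDist_le_edist_of_mem (hst hy)
      _ ≤ edist x y := by simpa using hf x y

section OrthogonalProjection

variable {𝕜 E : Type*} [RCLike 𝕜] [NormedAddCommGroup E] [InnerProductSpace 𝕜 E]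
  {G L : Submodule 𝕜 E} [L.HasOrthogonalProjection]

theorem starProjection_mem_of_orthogonal_le (hLG : Lᗮ ≤ G) {v : E} (hv : v ∈ G) :
    L.starProjection v ∈ G :=
  (G.sub_mem_iff_right hv).mp (hLG (L.sub_starProjection_mem_orthogonal v))

theorem infDist_inf_eq_infDist_of_orthogonal_le_general (hLG : Lᗮ ≤ G) {x : E} (hx : x ∈ L) :
    infDist x ((G ⊓ L : Submodule 𝕜 E) : Set E) = infDist x (G : Set E) := by
  have mapsTo_inf : Set.MapsTo L.starProjection G (G ⊓ L : Submodule 𝕜 E) := fun v hv =>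
    ⟨starProjection_mem_of_orthogonal_le hLG hv, L.starProjection_apply_mem v⟩
  have infEDist_inf_le : infEDist x (G ⊓ L : Submodule 𝕜 E) ≤ infEDist x G := by
    simpa only [Submodule.starProjection_eq_self_iff.mpr hx] using
      infEDist_le_infEDist_of_mapsTo L.lipschitzWith_starProjection mapsTo_inf x
  exact congrArg ENNReal.toReal (infEDist_inf_le.antisymm (infEDist_anti inf_le_left))

end OrthogonalProjection

/-- If `L⊥ ⊆ G`, then for every `x ∈ L` the distance from `x` to `G ∩ L` equals
the distance from `x` to `G`. -/
theorem infDist_inf_eq_infDist_of_orthogonal_le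
    {E : Type*} [NormedAddCommGroup E] [InnerProductSpace ℝ E] [FiniteDimensional ℝ E]
    (G L : Submodule ℝ E) (hLG : Lᗮ ≤ G) :
    ∀ x ∈ L, Metric.infDist x ((G ⊓ L : Submodule ℝ E) : Set E)
      = Metric.infDist x (G : Set E) :=
  fun _ hx => infDist_inf_eq_infDist_of_orthogonal_le_general hLG hx
end
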